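/- arXiv:1001.4652 — 2 statements merged into one kernel-verified Lean document; each statement's English description precedes it below -/
import Mathlib

section
/- The critical point of P_ω lies in the immediate parabolic basin: the connected component of Λ_ω containing −ω/2 has the parabolic fixed point 0 in its closure. -/
open Complex Filter Topology Set

/-- The quadratic polynomial `P_ω(z) = ω z + z²`. -/
noncomputable def Pq (ω : ℂ) : ℂ → ℂ := fun z => ω * z + z ^ 2

/-- The augmented parabolic basin `Λ̃_ω`: points whose orbit converges to `0`. -/
def basinAug (ω : ℂ) : Set ℂ := {z | Tendsto (fun n => (Pq ω)^[n] z) atTop (𝓝 0)}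

/-- The backward orbit of the parabolic fixed point `0`. -/
def preFixed (ω : ℂ) : Set ℂ := {z | ∃ n : ℕ, (Pq ω)^[n] z = 0}

/-- The parabolic basin `Λ_ω`. -/
def basin (ω : ℂ) : Set ℂ := basinAug ω \ preFixed ω

/-! The iterate `P_ω^q` is tangent to the identity at `0`, so it has an attracting petal there: in a
coordinate `w` on a right half-plane it becomes a near-translation `F`, and the inverse coordinate
`τ` maps the half-plane into the basin, with `τ w → 0` as `re w → ∞`. Fix `w` and suppose that no
component of the basin met by the orbit of `τ w` contains the critical point. Then `τ`, restricted
to the ball of radius `(n + 1) / 2` about `F^n w`, lifts through `P_ω^(q n)` to a holomorphic map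
`φ` sending `F^n w` to `τ w`. Since `φ` takes values in the basin, it is bounded by `2`, hence its
derivative at `F^n w` is `O(1 / n)`. The derivative of `F^n` at `w` is only `O(√n)`, and by the
chain rule the product of these two derivatives is the derivative of `τ` at `w`, which would thus
vanish. So the critical point lies in one of these components, and each of them contains the image
of the petal under some iterate of `P_ω`, which accumulates at `0`. -/

open Metric Bornology

/-! ### Holomorphic roots -/

theorem exists_differentiableOn_pow_eq {U : Set ℂ} {h : ℂ → ℂ} {c s₀ : ℂ} {n : ℕ}
    (hU : IsSimplyConnected U) (hUo : IsOpen U) (hc : c ∈ U) (hh : DifferentiableOn ℂ h U)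
    (h_ne : ∀ w ∈ U, h w ≠ 0) (hn : n ≠ 0) (hs₀ : s₀ ^ n = h c) :
    ∃ s : ℂ → ℂ, DifferentiableOn ℂ s U ∧ s c = s₀ ∧ ∀ w ∈ U, s w ^ n = h w := by
  obtain ⟨t, ht_cont, ht_pow⟩ :=
    exists_continuousOn_pow_eq hU hUo hh.continuousOn (by simpa using h_ne) hn
  have ht_ne : ∀ w ∈ U, t w ≠ 0 := fun w hw ↦ (pow_ne_zero_iff hn).1 (ht_pow w ▸ h_ne w hw)
  have ht_diff : DifferentiableOn ℂ t U := fun w hw ↦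
    have hU_nhds := hUo.mem_nhds hw
    ((hasDerivAt_pow n (t w)).of_comp_left (ht_cont.continuousAt hU_nhds)
      (hh.differentiableAt hU_nhds).hasDerivAt
      (mul_ne_zero (Nat.cast_ne_zero.2 hn) (pow_ne_zero _ (ht_ne w hw)))
      (.of_forall ht_pow)).differentiableAt.differentiableWithinAt
  refine ⟨fun w ↦ s₀ / t c * t w, ht_diff.const_mul _, div_mul_cancel₀ _ (ht_ne c hc),
    fun w _ ↦ ?_⟩
  rw [mul_pow, div_pow, hs₀, ht_pow, ht_pow, div_self (h_ne c hc), one_mul]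

theorem exists_eq_zero_and_forall_ball_dist_ne_zero {X E : Type*} [PseudoMetricSpace X]
    [ProperSpace X] [TopologicalSpace E] [T1Space E] [Zero E] {h : X → E} {c w : X} {r : ℝ}
    (hh : ContinuousOn h (ball c r)) (hw : w ∈ ball c r) (hw0 : h w = 0) :
    ∃ z ∈ ball c r, h z = 0 ∧ ∀ x ∈ ball c (dist z c), h x ≠ 0 := by
  have hsub : closedBall c (dist w c) ⊆ ball c r := closedBall_subset_ball hw
  have hcompact : IsCompact (closedBall c (dist w c) ∩ h ⁻¹' {0}) :=
    (isCompact_closedBall c _).of_isClosed_subset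
      ((hh.mono hsub).preimage_isClosed_of_isClosed isClosed_closedBall isClosed_singleton)
      inter_subset_left
  obtain ⟨z, ⟨hz_mem, hz0⟩, hz_min⟩ := hcompact.exists_isMinOn
    ⟨w, mem_closedBall.2 le_rfl, hw0⟩ (f := fun x ↦ dist x c) (by fun_prop)
  refine ⟨z, hsub hz_mem, hz0, fun x hx hx0 ↦ ?_⟩
  have hx_dist : dist x c < dist z c := hx
  exact hx_dist.not_ge (hz_min ⟨hx_dist.le.trans hz_mem, hx0⟩)

theorem zero_mem_closure_image_of_pow_eq {X : Type*} [TopologicalSpace X] {h s : X → ℂ}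
    {S : Set X} {z : X} {n : ℕ} (hn : n ≠ 0) (hz : z ∈ closure S) (hh : ContinuousAt h z)
    (hz0 : h z = 0) (hs : ∀ w ∈ S, s w ^ n = h w) : 0 ∈ closure (s '' S) := by
  have : (𝓝[S] z).NeBot := mem_closure_iff_nhdsWithin_neBot.1 hz
  have hpow : Tendsto (fun w ↦ s w ^ n) (𝓝[S] z) (𝓝 0) := by
    refine Tendsto.congr' ?_ (hz0 ▸ hh.tendsto.mono_left nhdsWithin_le_nhds)
    filter_upwards [self_mem_nhdsWithin] with w hw using (hs w hw).symm
  have hs0 : Tendsto s (𝓝[S] z) (𝓝 0) := by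
    rw [tendsto_zero_iff_norm_tendsto_zero] at hpow ⊢
    simpa [norm_pow, Real.pow_rpow_inv_natCast, hn] using
      hpow.rpow_const (p := (n : ℝ)⁻¹) (Or.inr (by positivity))
  refine mem_closure_of_tendsto hs0 ?_
  filter_upwards [self_mem_nhdsWithin] with w hw using mem_image_of_mem _ hw

theorem isSimplyConnected_ball {E : Type*} [NormedAddCommGroup E] [NormedSpace ℝ E] (c : E)
    {r : ℝ} (hr : 0 < r) : IsSimplyConnected (ball c r) :=
  have := (convex_ball c r).contractibleSpace ⟨c, mem_ball_self hr⟩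
  SimplyConnectedSpace.ofContractible _

-- A root branch exists up to the first zero of `h`, and its values there connect `s₀` to `0`.
theorem exists_differentiableOn_ball_pow_eq_of_zero_notMem_connectedComponentIn {h : ℂ → ℂ}
    {c s₀ : ℂ} {r : ℝ} {n : ℕ} (hr : 0 < r) (hh : DifferentiableOn ℂ h (ball c r)) (hn : n ≠ 0)
    (hs₀ : s₀ ^ n = h c)
    (h_comp : 0 ∉ connectedComponentIn ((· ^ n) ⁻¹' (h '' ball c r)) s₀) :
    ∃ s : ℂ → ℂ, DifferentiableOn ℂ s (ball c r) ∧ s c = s₀ ∧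
      ∀ w ∈ ball c r, s w ^ n = h w := by
  suffices h_ne : ∀ w ∈ ball c r, h w ≠ 0 from
    exists_differentiableOn_pow_eq (isSimplyConnected_ball c hr) isOpen_ball (mem_ball_self hr)
      hh h_ne hn hs₀
  intro w hw hw0
  obtain ⟨z, hz, hz0, hz_near⟩ :=
    exists_eq_zero_and_forall_ball_dist_ne_zero hh.continuousOn hw hw0
  have h_zero : (0 : ℂ) ∈ (· ^ n) ⁻¹' (h '' ball c r) := ⟨z, hz, by simp [hz0, hn]⟩
  rcases eq_or_ne z c with rfl | hzc
  · obtain rfl : s₀ = 0 := by rwa [hz0, pow_eq_zero_iff hn] at hs₀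
    exact h_comp (mem_connectedComponentIn h_zero)
  have hρ : 0 < dist z c := dist_pos.2 hzc
  have hsub : ball c (dist z c) ⊆ ball c r := ball_subset_ball (le_of_lt hz)
  obtain ⟨s, hs_diff, hs_c, hs_pow⟩ := exists_differentiableOn_pow_eq
    (isSimplyConnected_ball c hρ) isOpen_ball (mem_ball_self hρ) (hh.mono hsub) hz_near hn hs₀
  have h_closure : 0 ∈ closure (s '' ball c (dist z c)) :=
    zero_mem_closure_image_of_pow_eq hn (by simp [closure_ball c hρ.ne'])
      (hh.differentiableAt (isOpen_ball.mem_nhds hz)).continuousAt hz0 hs_pow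
  have h_conn : IsPreconnected (insert 0 (s '' ball c (dist z c))) :=
    ((convex_ball c _).isPreconnected.image s hs_diff.continuousOn).subset_closure
      (subset_insert _ _) (insert_subset h_closure subset_closure)
  refine h_comp (h_conn.subset_connectedComponentIn
    (mem_insert_of_mem _ ⟨c, mem_ball_self hρ, hs_c⟩) (insert_subset h_zero ?_) (mem_insert _ _))
  rintro _ ⟨x, hx, rfl⟩
  exact ⟨x, hsub hx, (hs_pow x hx).symm⟩

/-! ### Derivatives -/

theorem norm_deriv_le_of_norm_le_on_ball {E : Type*} [NormedAddCommGroup E] [NormedSpace ℂ E]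
    {f : ℂ → E} {c : ℂ} {r C : ℝ} (hr : 0 < r) (hf : DifferentiableOn ℂ f (ball c r))
    (hC : ∀ w ∈ ball c r, ‖f w‖ ≤ C) : ‖deriv f c‖ ≤ 2 * C / r := by
  refine norm_deriv_le_div_of_mapsTo_ball hf (fun w hw ↦ ?_) hr
  calc dist (f w) (f c) ≤ ‖f w‖ + ‖f c‖ := dist_le_norm_add_norm _ _
    _ ≤ 2 * C := by linarith [hC w hw, hC c (mem_ball_self hr)]

theorem deriv_eq_mul_deriv_of_semiconj_of_lift {𝕜 : Type*} [NontriviallyNormedField 𝕜]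
    {G T τ φ : 𝕜 → 𝕜} {w : 𝕜} (hG : DifferentiableAt 𝕜 G (τ w)) (hT : DifferentiableAt 𝕜 T w)
    (hτw : DifferentiableAt 𝕜 τ w) (hτTw : DifferentiableAt 𝕜 τ (T w))
    (hτ' : deriv τ (T w) ≠ 0) (hφ : DifferentiableAt 𝕜 φ (T w)) (hφ_eq : φ (T w) = τ w)
    (h_semiconj : G ∘ τ =ᶠ[𝓝 w] τ ∘ T) (h_lift : G ∘ φ =ᶠ[𝓝 (T w)] τ) :
    deriv τ w = deriv φ (T w) * deriv T w := by
  have h_lift' : deriv G (τ w) * deriv φ (T w) = deriv τ (T w) := by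
    rw [← h_lift.deriv_eq, deriv_comp _ (hφ_eq ▸ hG) hφ, hφ_eq]
  have h_semiconj' : deriv G (τ w) * deriv τ w = deriv τ (T w) * deriv T w := by
    rw [← deriv_comp _ hG hτw, h_semiconj.deriv_eq, deriv_comp _ hτTw hT]
  have hG' : deriv G (τ w) ≠ 0 := left_ne_zero_of_mul (h_lift' ▸ hτ')
  refine mul_left_cancel₀ hG' ?_
  rw [h_semiconj', ← h_lift', mul_assoc]

/-! ### Near-translations of a right half-plane -/

/-- `F` is holomorphic and uniformly close to the translation `w ↦ w + 1` on the half-plane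
`R < re w`. The constant `1 / 16` is small enough for the derivatives of the iterates `F^[n]` to
grow no faster than `√(n + 1)`. -/
structure IsNearTranslation (F : ℂ → ℂ) (R : ℝ) : Prop where
  differentiableAt : ∀ {w : ℂ}, R < w.re → DifferentiableAt ℂ F w
  norm_sub_sub_one_le : ∀ {w : ℂ}, R < w.re → ‖F w - w - 1‖ ≤ 1 / 16

theorem lt_re_of_mem_ball {R ρ : ℝ} {u w : ℂ} (hu : R + ρ ≤ u.re) (hw : w ∈ ball u ρ) :
    R < w.re := by
  have := (abs_re_le_norm (w - u)).trans_lt (mem_ball_iff_norm.1 hw)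
  rw [sub_re, abs_lt] at this
  linarith

namespace IsNearTranslation

variable {F : ℂ → ℂ} {R : ℝ} {w : ℂ}

theorem re_add_half_le (hF : IsNearTranslation F R) (hw : R < w.re) :
    w.re + 1 / 2 ≤ (F w).re := by
  have := (abs_re_le_norm _).trans (hF.norm_sub_sub_one_le hw)
  rw [sub_re, sub_re, one_re, abs_le] at this
  linarith

theorem re_add_le_re_iterate (hF : IsNearTranslation F R) (hw : R < w.re) (n : ℕ) :
    w.re + n / 2 ≤ (F^[n] w).re := by
  induction n with
  | zero => simp
  | succ n ih =>
    have := hF.re_add_half_le (w := F^[n] w) (by linarith [n.cast_nonneg (α := ℝ)])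
    rw [Function.iterate_succ_apply']
    push_cast
    linarith

theorem lt_re_iterate (hF : IsNearTranslation F R) (hw : R < w.re) (n : ℕ) :
    R < (F^[n] w).re := by
  linarith [hF.re_add_le_re_iterate hw n, n.cast_nonneg (α := ℝ)]

theorem add_half_le_re_iterate (hF : IsNearTranslation F R) (hw : R + 1 / 2 ≤ w.re) (n : ℕ) :
    R + (n + 1) / 2 ≤ (F^[n] w).re := by
  linarith [hF.re_add_le_re_iterate (w := w) (by linarith) n]

theorem tendsto_iterate (hF : IsNearTranslation F R) (hw : R < w.re) :
    Tendsto (fun n ↦ F^[n] w) atTop (comap re atTop) :=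
  tendsto_comap_iff.2 <| tendsto_atTop_mono (hF.re_add_le_re_iterate hw) <|
    tendsto_atTop_add_const_left _ _ <| tendsto_natCast_atTop_atTop.atTop_div_const two_pos

theorem differentiableAt_iterate (hF : IsNearTranslation F R) (hw : R < w.re) (n : ℕ) :
    DifferentiableAt ℂ F^[n] w := by
  induction n with
  | zero => exact differentiableAt_id
  | succ n ih =>
    rw [Function.iterate_succ']
    exact (hF.differentiableAt (hF.lt_re_iterate hw n)).comp w ih

theorem deriv_iterate_succ (hF : IsNearTranslation F R) (hw : R < w.re) (n : ℕ) :
    deriv F^[n + 1] w = deriv F (F^[n] w) * deriv F^[n] w := by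
  rw [Function.iterate_succ', deriv_comp w (hF.differentiableAt (hF.lt_re_iterate hw n))
    (hF.differentiableAt_iterate hw n)]

theorem norm_deriv_sub_one_le (hF : IsNearTranslation F R) {ρ : ℝ} (hρ : 0 < ρ)
    (hw : R + ρ ≤ w.re) : ‖deriv F w - 1‖ ≤ 1 / (8 * ρ) := by
  have hderiv : deriv (fun z ↦ F z - z - 1) w = deriv F w - 1 :=
    (((hF.differentiableAt (by linarith)).hasDerivAt.sub (hasDerivAt_id w)).sub_const 1).deriv
  calc ‖deriv F w - 1‖ = ‖deriv (fun z ↦ F z - z - 1) w‖ := by rw [hderiv]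
    _ ≤ 2 * (1 / 16) / ρ := by
      refine norm_deriv_le_of_norm_le_on_ball hρ (fun z hz ↦ ?_)
        fun z hz ↦ hF.norm_sub_sub_one_le (lt_re_of_mem_ball hw hz)
      exact (((hF.differentiableAt (lt_re_of_mem_ball hw hz)).sub differentiableAt_id).sub_const
        1).differentiableWithinAt
    _ = 1 / (8 * ρ) := by ring

theorem norm_deriv_iterate_sq_le (hF : IsNearTranslation F R) (hw : R + 1 / 2 ≤ w.re) (n : ℕ) :
    ‖deriv F^[n] w‖ ^ 2 ≤ n + 1 := by
  induction n with
  | zero => simp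
  | succ n ih =>
    set t : ℝ := 1 / (4 * (n + 1)) with ht
    have ht_mul : t * (n + 1) = 1 / 4 := by rw [ht]; field_simp
    have ht_nonneg : 0 ≤ t := by positivity
    have h_factor : ‖deriv F (F^[n] w)‖ ≤ 1 + t := by
      have h_sub : ‖deriv F (F^[n] w) - 1‖ ≤ t :=
        (hF.norm_deriv_sub_one_le (by positivity) (hF.add_half_le_re_iterate hw n)).trans_eq
          (by rw [ht]; ring)
      simpa using (norm_le_norm_add_norm_sub' _ 1).trans (add_le_add_right h_sub ‖(1 : ℂ)‖)
    rw [hF.deriv_iterate_succ (by linarith), norm_mul, mul_pow]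
    calc ‖deriv F (F^[n] w)‖ ^ 2 * ‖deriv F^[n] w‖ ^ 2
        ≤ (1 + t) ^ 2 * (n + 1) := by gcongr
      _ = (n + 1) + t * (n + 1) * (2 + t) := by ring
      _ ≤ ↑(n + 1) + 1 := by
        rw [ht_mul]
        push_cast
        nlinarith [n.cast_nonneg (α := ℝ)]

end IsNearTranslation

/-! ### Attracting petals of parabolic germs -/

/-- `τ` parametrizes an attracting petal at `0` of the map `g` by the half-plane `R < re w`, and
`F` is the map `g` read in this parametrization, a near-translation. In a Leau–Fatou flower, `τ`
is a branch of `w ↦ v w ^ (-1 / m)`. -/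
structure IsAttractingPetal (g τ F : ℂ → ℂ) (R : ℝ) : Prop extends IsNearTranslation F R where
  tendsto_zero : Tendsto τ (comap re atTop) (𝓝 0)
  ne_zero : ∀ {w : ℂ}, R < w.re → τ w ≠ 0
  differentiableAt_param : ∀ {w : ℂ}, R < w.re → DifferentiableAt ℂ τ w
  deriv_param_ne_zero : ∀ {w : ℂ}, R < w.re → deriv τ w ≠ 0
  map_param : ∀ {w : ℂ}, R < w.re → g (τ w) = τ (F w)

namespace IsAttractingPetal

variable {g τ F : ℂ → ℂ} {R : ℝ} {w : ℂ}

theorem iterate_param (h : IsAttractingPetal g τ F R) (hw : R < w.re) (n : ℕ) :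
    g^[n] (τ w) = τ (F^[n] w) := by
  induction n with
  | zero => rfl
  | succ n ih =>
    rw [Function.iterate_succ_apply', ih, h.map_param (h.lt_re_iterate hw n),
      Function.iterate_succ_apply']

theorem tendsto_iterate_param (h : IsAttractingPetal g τ F R) (hw : R < w.re) :
    Tendsto (fun n ↦ g^[n] (τ w)) atTop (𝓝 0) :=
  (h.tendsto_zero.comp (h.tendsto_iterate hw)).congr fun n ↦ (h.iterate_param hw n).symm

theorem isPreconnected_image (h : IsAttractingPetal g τ F R) :
    IsPreconnected (τ '' {w | R < w.re}) :=
  (convex_halfSpace_re_gt R).isPreconnected.image τ fun _ hw ↦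
    (h.differentiableAt_param hw).continuousAt.continuousWithinAt

end IsAttractingPetal

theorem exists_eventually_eq_mul_one_add_pow_mul {𝕜 : Type*} [NontriviallyNormedField 𝕜]
    {g : 𝕜 → 𝕜} (hg : AnalyticAt 𝕜 g 0) (hg0 : g 0 = 0) (hg' : deriv g 0 = 1)
    (hne : ¬ ∀ᶠ z in 𝓝 0, g z = z) :
    ∃ (m : ℕ) (e : 𝕜 → 𝕜), m ≠ 0 ∧ AnalyticAt 𝕜 e 0 ∧ e 0 ≠ 0 ∧
      ∀ᶠ z in 𝓝 0, g z = z * (1 + z ^ m * e z) := by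
  obtain ⟨n, e, he, he0, h_eq⟩ :=
    (hg.sub analyticAt_id).exists_eventuallyEq_pow_smul_nonzero_iff.2 <| by
      simpa only [Pi.sub_apply, id, sub_eq_zero] using hne
  simp only [Pi.sub_apply, id, sub_zero, smul_eq_mul] at h_eq
  have hn_zero : n ≠ 0 := by
    rintro rfl
    exact he0 (by simpa [hg0] using h_eq.self_of_nhds.symm)
  have hn_one : n ≠ 1 := by
    rintro rfl
    have h_sub : deriv (fun z ↦ g z - z) 0 = 0 := by
      rw [deriv_fun_sub hg.differentiableAt differentiableAt_fun_id, hg', deriv_id'', sub_self]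
    have h_mul : deriv (fun z ↦ z ^ 1 * e z) 0 = e 0 := by
      simp [deriv_fun_mul differentiableAt_fun_id he.differentiableAt]
    exact he0 (by rw [← h_mul, ← EventuallyEq.deriv_eq h_eq, h_sub])
  refine ⟨n - 1, e, by omega, he, he0, ?_⟩
  filter_upwards [h_eq] with z hz
  rw [mul_add, ← mul_assoc, ← pow_succ', Nat.sub_add_cancel (by omega), ← hz]
  ring

/-- The branch of `w ↦ v w ^ (-1 / m)` inverse to the coordinate `w = (v / z) ^ m`. -/
noncomputable def petalParam (v : ℂ) (m : ℕ) (w : ℂ) : ℂ := v * w ^ (-(m : ℂ)⁻¹)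

/-- The germ `z ↦ z * (1 + z ^ m * e z)` in the coordinate `w = (v / z) ^ m`. -/
noncomputable def petalStep (v : ℂ) (m : ℕ) (e : ℂ → ℂ) (w : ℂ) : ℂ :=
  w / (1 + petalParam v m w ^ m * e (petalParam v m w)) ^ m

section PetalParam

variable {v : ℂ} {m : ℕ}

theorem petalParam_pow (hm : m ≠ 0) (w : ℂ) : petalParam v m w ^ m = v ^ m / w := by
  rw [petalParam, mul_pow, cpow_neg, inv_pow, cpow_nat_inv_pow w hm, div_eq_mul_inv]

theorem petalParam_ne_zero (hv : v ≠ 0) {w : ℂ} (hw : w ≠ 0) : petalParam v m w ≠ 0 := by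
  simp [petalParam, cpow_eq_zero_iff, hv, hw]

theorem hasDerivAt_petalParam {w : ℂ} (hw : w ∈ slitPlane) :
    HasDerivAt (petalParam v m) (v * (-(m : ℂ)⁻¹ * w ^ (-(m : ℂ)⁻¹ - 1))) w :=
  (hasStrictDerivAt_cpow_const hw).hasDerivAt.const_mul v

theorem tendsto_petalParam (hm : m ≠ 0) : Tendsto (petalParam v m) (cobounded ℂ) (𝓝 0) := by
  have h_norm (w : ℂ) : ‖petalParam v m w‖ = ‖v‖ * ‖w‖ ^ (-(m : ℝ)⁻¹) := by
    rw [petalParam, norm_mul, ← norm_cpow_real]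
    push_cast
    rfl
  rw [tendsto_zero_iff_norm_tendsto_zero]
  simpa only [h_norm, mul_zero, Function.comp_def] using
    ((tendsto_rpow_neg_atTop (y := (m : ℝ)⁻¹) (by positivity)).comp
      tendsto_norm_cobounded_atTop).const_mul ‖v‖

theorem petalParam_div_pow (hm : m ≠ 0) {w a : ℂ} (hw : 0 < w.re) (ha : a ≠ 0)
    (h_arg : |m * a.arg| < Real.pi / 2) : petalParam v m (w / a ^ m) = petalParam v m w * a := by
  have hm' : (m : ℂ) ≠ 0 := Nat.cast_ne_zero.2 hm
  have hw0 : w ≠ 0 := by rintro rfl; simp at hw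
  have hw_arg : |w.arg| < Real.pi / 2 := abs_arg_lt_pi_div_two_iff.2 (Or.inl hw)
  rw [abs_lt] at h_arg hw_arg
  have h_exp : exp (log w - m * log a) = w / a ^ m := by
    rw [exp_sub, exp_nat_mul, exp_log hw0, exp_log ha]
  have h_im : (log w - m * log a).im = w.arg - m * a.arg := by simp [log_im]
  have h_log : log (w / a ^ m) = log w - m * log a := by
    rw [← h_exp, log_exp] <;> rw [h_im] <;> linarith
  have hwa : w / a ^ m ≠ 0 := div_ne_zero hw0 (pow_ne_zero m ha)
  have h_mul : (log w - m * log a) * (-(m : ℂ)⁻¹) = log w * (-(m : ℂ)⁻¹) + log a := by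
    field_simp
    ring
  rw [petalParam, petalParam, cpow_def_of_ne_zero hwa, cpow_def_of_ne_zero hw0, h_log, h_mul,
    exp_add, exp_log ha, mul_assoc]

theorem tendsto_petalParam_pow_mul (hm : m ≠ 0) {e : ℂ → ℂ} (he : ContinuousAt e 0) :
    Tendsto (fun w ↦ petalParam v m w ^ m * e (petalParam v m w)) (cobounded ℂ) (𝓝 0) := by
  have hτ := tendsto_petalParam (v := v) hm
  have h := (hτ.pow m).mul (he.tendsto.comp hτ)
  rwa [zero_pow hm, zero_mul] at h

theorem hasDerivAt_inv_one_add_pow_zero {𝕜 : Type*} [NontriviallyNormedField 𝕜] (m : ℕ) :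
    HasDerivAt (fun t : 𝕜 ↦ ((1 + t) ^ m)⁻¹) (-m) 0 := by
  have h := (((hasDerivAt_id (0 : 𝕜)).const_add 1).fun_pow m).fun_inv (by simp)
  simpa using h

theorem tendsto_petalStep_sub_sub_one (hm : m ≠ 0) {e : ℂ → ℂ} (he : ContinuousAt e 0)
    (hv : v ^ m * e 0 * -m = 1) :
    Tendsto (fun w ↦ petalStep v m e w - w - 1) (cobounded ℂ) (𝓝 0) := by
  set x : ℂ → ℂ := fun w ↦ petalParam v m w ^ m * e (petalParam v m w) with hx
  set f : ℂ → ℂ := fun t ↦ ((1 + t) ^ m)⁻¹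
  have hf : HasDerivAt f (-m) 0 := hasDerivAt_inv_one_add_pow_zero m
  have h_slope : Tendsto (fun w ↦ dslope f 0 (x w)) (cobounded ℂ) (𝓝 (-m)) := by
    rw [← hf.deriv, ← dslope_same]
    exact (continuousAt_dslope_same.2 hf.differentiableAt).tendsto.comp
      (tendsto_petalParam_pow_mul hm he)
  have h_lim : Tendsto (fun w ↦ v ^ m * e (petalParam v m w) * dslope f 0 (x w))
      (cobounded ℂ) (𝓝 1) := by
    rw [← hv]
    exact ((he.tendsto.comp (tendsto_petalParam hm)).const_mul (v ^ m)).mul h_slope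
  refine (sub_self (1 : ℂ) ▸ h_lim.sub_const 1).congr' ?_
  filter_upwards [eventually_ne_cobounded 0] with w hw
  have h_increment : x w * dslope f 0 (x w) = f (x w) - 1 := by
    simpa [f] using sub_smul_dslope f 0 (x w)
  have hwx : w * x w = v ^ m * e (petalParam v m w) := by
    simp only [hx, petalParam_pow hm]
    field_simp
  rw [← hwx, mul_assoc, h_increment, petalStep, div_eq_mul_inv]
  ring

theorem differentiableAt_petalStep {e : ℂ → ℂ} {w : ℂ} (hw : w ∈ slitPlane)
    (he : DifferentiableAt ℂ e (petalParam v m w))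
    (h_ne : 1 + petalParam v m w ^ m * e (petalParam v m w) ≠ 0) :
    DifferentiableAt ℂ (petalStep v m e) w := by
  have hτ := (hasDerivAt_petalParam (v := v) (m := m) hw).differentiableAt
  exact differentiableAt_id.div ((((hτ.pow m).mul (he.comp w hτ)).const_add 1).pow m)
    (pow_ne_zero m h_ne)

theorem comap_re_atTop_le_cobounded : comap re atTop ≤ cobounded ℂ := by
  rw [← comap_norm_atTop, ← tendsto_iff_comap]
  exact tendsto_atTop_mono re_le_norm tendsto_comap

theorem exists_isAttractingPetal_petalParam {g e : ℂ → ℂ} (hm : m ≠ 0) (he : AnalyticAt ℂ e 0)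
    (hg : ∀ᶠ z in 𝓝 0, g z = z * (1 + z ^ m * e z)) (hv : v ^ m * e 0 * -m = 1) :
    ∃ R : ℝ, IsAttractingPetal g (petalParam v m) (petalStep v m e) R := by
  have hv0 : v ≠ 0 := by
    rintro rfl
    simp [hm] at hv
  have hτ := tendsto_petalParam (v := v) hm
  have h_factor : Tendsto (fun w ↦ 1 + petalParam v m w ^ m * e (petalParam v m w))
      (cobounded ℂ) (𝓝 1) := by
    simpa using (tendsto_petalParam_pow_mul (v := v) hm he.continuousAt).const_add 1
  have h_arg : ∀ᶠ a : ℂ in 𝓝 1, |m * a.arg| < Real.pi / 2 := by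
    have : ContinuousAt (fun a : ℂ ↦ |m * a.arg|) 1 :=
      ((continuousAt_arg one_mem_slitPlane).const_mul _).abs
    exact this.eventually_lt_const (by simp [Real.pi_pos])
  have h_step : ∀ᶠ w in cobounded ℂ, ‖petalStep v m e w - w - 1‖ < 1 / 16 :=
    (tendsto_petalStep_sub_sub_one hm he.continuousAt hv).norm.eventually_lt_const (by simp)
  obtain ⟨R, hR0, hR⟩ := ((atTop_basis_Ioi' (0 : ℝ)).comap re).eventually_iff.1 <|
    comap_re_atTop_le_cobounded <| h_step.and <| (h_factor.eventually h_arg).and <|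
      (h_factor.eventually_ne one_ne_zero).and <|
        (hτ.eventually hg).and (hτ.eventually he.eventually_analyticAt)
  have h_slit {w : ℂ} (hw : R < w.re) : w ∈ slitPlane := Or.inl (lt_trans hR0 hw)
  refine ⟨R, ⟨fun hw ↦ ?_, fun hw ↦ (hR hw).1.le⟩, hτ.mono_left comap_re_atTop_le_cobounded,
    fun hw ↦ petalParam_ne_zero hv0 (slitPlane_ne_zero (h_slit hw)),
    fun hw ↦ (hasDerivAt_petalParam (h_slit hw)).differentiableAt, fun hw ↦ ?_, fun hw ↦ ?_⟩
  · obtain ⟨-, -, h_ne, -, he_an⟩ := hR hw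
    exact differentiableAt_petalStep (h_slit hw) he_an.differentiableAt h_ne
  · have hw0 := slitPlane_ne_zero (h_slit hw)
    simp [(hasDerivAt_petalParam (h_slit hw)).deriv, hv0, hm, cpow_eq_zero_iff, hw0]
  · obtain ⟨-, h_arg, h_ne, hg_eq, -⟩ := hR hw
    rw [hg_eq, petalStep, petalParam_div_pow hm (lt_trans hR0 hw) h_ne h_arg]

end PetalParam

theorem exists_isAttractingPetal {g : ℂ → ℂ} (hg : AnalyticAt ℂ g 0) (hg0 : g 0 = 0)
    (hg' : deriv g 0 = 1) (hne : ¬ ∀ᶠ z in 𝓝 0, g z = z) :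
    ∃ (τ F : ℂ → ℂ) (R : ℝ), IsAttractingPetal g τ F R := by
  obtain ⟨m, e, hm, he, he0, hg_eq⟩ := exists_eventually_eq_mul_one_add_pow_mul hg hg0 hg' hne
  have hm' : (m : ℂ) ≠ 0 := Nat.cast_ne_zero.2 hm
  obtain ⟨v, hv⟩ := IsAlgClosed.exists_pow_nat_eq (-(e 0 * m)⁻¹) (Nat.pos_of_ne_zero hm)
  obtain ⟨R, hR⟩ := exists_isAttractingPetal_petalParam hm he hg_eq (v := v) (by
    rw [hv]
    field_simp)
  exact ⟨_, _, R, hR⟩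

/-! ### Iteration of quadratic polynomials -/

theorem tendsto_iterate_of_tendsto_iterate_iterate {X : Type*} [TopologicalSpace X] {f : X → X}
    {x z : X} {q : ℕ} (hf : ContinuousAt f x) (hx : f x = x) (hq : q ≠ 0)
    (h : Tendsto (fun n ↦ (f^[q])^[n] z) atTop (𝓝 x)) :
    Tendsto (fun n ↦ f^[n] z) atTop (𝓝 x) := by
  refine fun U hU ↦ Eventually.atTop_of_arithmetic hq fun k _ ↦ ?_
  have hfk : Tendsto f^[k] (𝓝 x) (𝓝 x) := by
    simpa only [ContinuousAt, Function.iterate_fixed hx] using hf.iterate hx k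
  filter_upwards [(hfk.comp h).eventually_mem hU] with n hn
  rwa [add_comm, Function.iterate_add_apply, Function.iterate_mul]

section Pq

variable {ω : ℂ}

theorem Pq_eq_sq_sub (ω z : ℂ) : Pq ω z = (z + ω / 2) ^ 2 - ω ^ 2 / 4 := by
  rw [Pq]
  ring

theorem Pq_zero (ω : ℂ) : Pq ω 0 = 0 := by
  simp [Pq]

theorem iterate_Pq_zero (ω : ℂ) (n : ℕ) : (Pq ω)^[n] 0 = 0 :=
  Function.iterate_fixed (Pq_zero ω) n

theorem hasDerivAt_Pq (ω z : ℂ) : HasDerivAt (Pq ω) (ω + 2 * z) z := by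
  have h := ((hasDerivAt_id z).const_mul ω).fun_add (hasDerivAt_pow 2 z)
  simp only [id, Nat.cast_ofNat, pow_one, mul_one, Nat.add_one_sub_one] at h
  exact h

theorem differentiable_iterate_Pq (ω : ℂ) (n : ℕ) : Differentiable ℂ (Pq ω)^[n] :=
  Differentiable.iterate (fun z ↦ (hasDerivAt_Pq ω z).differentiableAt) n

theorem deriv_iterate_Pq_zero (ω : ℂ) (n : ℕ) : deriv (Pq ω)^[n] 0 = ω ^ n := by
  simpa using ((hasDerivAt_Pq ω 0).iterate _ (Pq_zero ω) n).deriv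

theorem not_eventually_iterate_Pq_eq (hω : ω ≠ 0) {n : ℕ} (hn : n ≠ 0) :
    ¬ ∀ᶠ z in 𝓝 0, (Pq ω)^[n] z = z := by
  intro h
  have h_id : (Pq ω)^[n] = id :=
    AnalyticOnNhd.eq_of_eventuallyEq (fun z _ ↦ (differentiable_iterate_Pq ω n).analyticAt z)
      analyticOnNhd_id h
  have h_root : Pq ω (-ω) = 0 := by simp [Pq, sq]
  obtain ⟨k, rfl⟩ := Nat.exists_eq_succ_of_ne_zero hn
  have h_collapse : (Pq ω)^[k + 1] (-ω) = 0 := by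
    rw [Function.iterate_succ_apply, h_root, iterate_Pq_zero]
  rw [h_id, id, neg_eq_zero] at h_collapse
  exact hω h_collapse

theorem Pq_mem_basin_iff {z : ℂ} : Pq ω z ∈ basin ω ↔ z ∈ basin ω := by
  have h_aug : Pq ω z ∈ basinAug ω ↔ z ∈ basinAug ω :=
    tendsto_add_atTop_iff_nat (f := fun n ↦ (Pq ω)^[n] z) 1
  have h_pre : Pq ω z ∈ preFixed ω ↔ z ∈ preFixed ω := by
    refine ⟨fun ⟨n, hn⟩ ↦ ⟨n + 1, hn⟩, fun ⟨n, hn⟩ ↦ ⟨n, ?_⟩⟩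
    rw [← Function.iterate_succ_apply, Function.iterate_succ_apply', hn, Pq_zero]
  rw [basin, Set.mem_sdiff, Set.mem_sdiff, h_aug, h_pre]

theorem iterate_Pq_mem_basin_iff {z : ℂ} (n : ℕ) : (Pq ω)^[n] z ∈ basin ω ↔ z ∈ basin ω := by
  induction n with
  | zero => rfl
  | succ n ih => rw [Function.iterate_succ_apply', Pq_mem_basin_iff, ih]

theorem two_lt_norm_Pq (hω : ‖ω‖ ≤ 1) {z : ℂ} (hz : 2 < ‖z‖) : 2 < ‖Pq ω z‖ := by
  calc (2 : ℝ) < ‖z‖ * (‖z‖ - 1) := by nlinarith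
    _ ≤ ‖z‖ * ‖z + ω‖ := by
      gcongr
      linarith [norm_sub_le_norm_add z ω]
    _ = ‖Pq ω z‖ := by
      rw [← norm_mul, Pq]
      ring_nf

theorem norm_le_two_of_mem_basinAug (hω : ‖ω‖ ≤ 1) {z : ℂ} (hz : z ∈ basinAug ω) : ‖z‖ ≤ 2 := by
  by_contra! hz_norm
  have h_orbit (n : ℕ) : 2 < ‖(Pq ω)^[n] z‖ := by
    induction n with
    | zero => exact hz_norm
    | succ n ih =>
      rw [Function.iterate_succ_apply']
      exact two_lt_norm_Pq hω ih
  have h_lim : Tendsto (fun n ↦ ‖(Pq ω)^[n] z‖) atTop (𝓝 0) :=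
    tendsto_zero_iff_norm_tendsto_zero.1 hz
  linarith [ge_of_tendsto' h_lim fun n ↦ (h_orbit n).le]

theorem exists_lift_Pq {φ : ℂ → ℂ} {b y : ℂ} {r : ℝ} (hr : 0 < r)
    (hφ : DifferentiableOn ℂ φ (ball b r)) (hφ_mem : MapsTo φ (ball b r) (basin ω))
    (hy : Pq ω y = φ b) (h_crit : -ω / 2 ∉ connectedComponentIn (basin ω) y) :
    ∃ ψ : ℂ → ℂ, DifferentiableOn ℂ ψ (ball b r) ∧ ψ b = y ∧
      ∀ w ∈ ball b r, Pq ω (ψ w) = φ w := by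
  set S : Set ℂ := (· ^ 2) ⁻¹' ((fun w ↦ φ w + ω ^ 2 / 4) '' ball b r)
  have hy_sq : (y + ω / 2) ^ 2 = φ b + ω ^ 2 / 4 := by rw [← hy, Pq_eq_sq_sub]; ring
  have hS : (· - ω / 2) '' S ⊆ basin ω := by
    rintro _ ⟨s, ⟨w, hw, hs⟩, rfl⟩
    refine Pq_mem_basin_iff.1 ?_
    have : Pq ω (s - ω / 2) = φ w := by
      rw [Pq_eq_sq_sub, sub_add_cancel]
      exact sub_eq_of_eq_add hs.symm
    exact this ▸ hφ_mem hw
  have h_zero : 0 ∉ connectedComponentIn S (y + ω / 2) := fun h0 ↦ h_crit <| by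
    have hyS : y + ω / 2 ∈ S := ⟨b, mem_ball_self hr, hy_sq.symm⟩
    have h_image := (continuous_sub_right (ω / 2)).continuousOn.image_connectedComponentIn_subset
      hyS (mem_image_of_mem _ h0)
    simpa [neg_div] using connectedComponentIn_mono _ hS h_image
  obtain ⟨s, hs_diff, hs_b, hs_sq⟩ :=
    exists_differentiableOn_ball_pow_eq_of_zero_notMem_connectedComponentIn hr
      (hφ.add_const _) two_ne_zero hy_sq h_zero
  refine ⟨fun w ↦ s w - ω / 2, hs_diff.sub_const _, by simp [hs_b], fun w hw ↦ ?_⟩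
  rw [Pq_eq_sq_sub, sub_add_cancel, hs_sq w hw, add_sub_cancel_right]

theorem exists_lift_iterate_Pq {φ : ℂ → ℂ} {b y : ℂ} {r : ℝ} {n : ℕ} (hr : 0 < r)
    (hφ : DifferentiableOn ℂ φ (ball b r)) (hφ_mem : MapsTo φ (ball b r) (basin ω))
    (hy : (Pq ω)^[n] y = φ b)
    (h_crit : ∀ k < n, -ω / 2 ∉ connectedComponentIn (basin ω) ((Pq ω)^[k] y)) :
    ∃ ψ : ℂ → ℂ, DifferentiableOn ℂ ψ (ball b r) ∧ ψ b = y ∧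
      ∀ w ∈ ball b r, (Pq ω)^[n] (ψ w) = φ w := by
  induction n generalizing φ with
  | zero => exact ⟨φ, hφ, hy.symm, fun _ _ ↦ rfl⟩
  | succ n ih =>
    rw [Function.iterate_succ_apply'] at hy
    obtain ⟨φ₁, hφ₁, hφ₁_b, hφ₁_eq⟩ := exists_lift_Pq hr hφ hφ_mem hy (h_crit n n.lt_succ_self)
    have hφ₁_mem : MapsTo φ₁ (ball b r) (basin ω) := fun w hw ↦
      Pq_mem_basin_iff.1 (hφ₁_eq w hw ▸ hφ_mem hw)
    obtain ⟨ψ, hψ, hψ_b, hψ_eq⟩ := ih hφ₁ hφ₁_mem hφ₁_b.symm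
      fun k hk ↦ h_crit k (hk.trans n.lt_succ_self)
    refine ⟨ψ, hψ, hψ_b, fun w hw ↦ ?_⟩
    rw [Function.iterate_succ_apply', hψ_eq w hw, hφ₁_eq w hw]

end Pq

/-! ### The critical point and the petal -/

namespace IsAttractingPetal

variable {ω w : ℂ} {q : ℕ} {τ F : ℂ → ℂ} {R : ℝ}

theorem param_mem_basin (h : IsAttractingPetal (Pq ω)^[q] τ F R) (hq : q ≠ 0) (hw : R < w.re) :
    τ w ∈ basin ω := by
  refine ⟨tendsto_iterate_of_tendsto_iterate_iterate (hasDerivAt_Pq ω 0).continuousAt (Pq_zero ω)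
    hq (h.tendsto_iterate_param hw), fun ⟨n, hn⟩ ↦ h.ne_zero (h.lt_re_iterate hw n) ?_⟩
  obtain ⟨k, hk⟩ := Nat.exists_eq_add_of_le' (Nat.le_mul_of_pos_left n (Nat.pos_of_ne_zero hq))
  rw [← h.iterate_param hw, ← Function.iterate_mul, hk, Function.iterate_add_apply, hn,
    iterate_Pq_zero]

theorem zero_mem_closure_connectedComponentIn (h : IsAttractingPetal (Pq ω)^[q] τ F R)
    (hq : q ≠ 0) (hw : R < w.re) (k : ℕ) :
    0 ∈ closure (connectedComponentIn (basin ω) ((Pq ω)^[k] (τ w))) := by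
  have h_cont : Continuous (Pq ω)^[k] := (differentiable_iterate_Pq ω k).continuous
  have h_sub : (Pq ω)^[k] '' (τ '' {w | R < w.re}) ⊆
      connectedComponentIn (basin ω) ((Pq ω)^[k] (τ w)) := by
    refine (h.isPreconnected_image.image _ h_cont.continuousOn).subset_connectedComponentIn
      (mem_image_of_mem _ (mem_image_of_mem _ hw)) ?_
    rintro _ ⟨_, ⟨z, hz, rfl⟩, rfl⟩
    exact (iterate_Pq_mem_basin_iff k).2 (h.param_mem_basin hq hz)
  have h_lim : Tendsto (fun n ↦ (Pq ω)^[k] (τ (F^[n] w))) atTop (𝓝 0) := by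
    have := (h_cont.tendsto 0).comp (h.tendsto_zero.comp (h.tendsto_iterate hw))
    rwa [iterate_Pq_zero] at this
  exact mem_closure_of_tendsto h_lim <| .of_forall fun n ↦
    h_sub (mem_image_of_mem _ (mem_image_of_mem _ (h.lt_re_iterate hw n)))

theorem exists_deriv_param_eq_mul (h : IsAttractingPetal (Pq ω)^[q] τ F R) (hq : q ≠ 0)
    (hω : ‖ω‖ ≤ 1) (hw : R + 1 / 2 ≤ w.re)
    (h_crit : ∀ k, -ω / 2 ∉ connectedComponentIn (basin ω) ((Pq ω)^[k] (τ w))) (n : ℕ) :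
    ∃ d : ℂ, ‖d‖ ≤ 8 / (n + 1) ∧ deriv τ w = d * deriv F^[n] w := by
  have hwR : R < w.re := by linarith
  set u := F^[n] w
  have hρ : (0 : ℝ) < (n + 1) / 2 := by positivity
  have h_ball {z : ℂ} (hz : z ∈ ball u ((n + 1) / 2)) : R < z.re :=
    lt_re_of_mem_ball (h.add_half_le_re_iterate hw n) hz
  have hu_ball : ball u ((n + 1) / 2) ∈ 𝓝 u := ball_mem_nhds u hρ
  have h_iterate {z : ℂ} (hz : R < z.re) : (Pq ω)^[q * n] (τ z) = τ (F^[n] z) := by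
    rw [Function.iterate_mul, h.iterate_param hz]
  obtain ⟨φ, hφ, hφ_u, hφ_eq⟩ := exists_lift_iterate_Pq hρ
    (fun z hz ↦ (h.differentiableAt_param (h_ball hz)).differentiableWithinAt)
    (fun z hz ↦ h.param_mem_basin hq (h_ball hz)) (h_iterate hwR) (fun k _ ↦ h_crit k)
  have hφ_norm : ∀ z ∈ ball u ((n + 1) / 2), ‖φ z‖ ≤ 2 := fun z hz ↦
    have hφz : φ z ∈ basin ω :=
      (iterate_Pq_mem_basin_iff (q * n)).1 (hφ_eq z hz ▸ h.param_mem_basin hq (h_ball hz))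
    norm_le_two_of_mem_basinAug hω hφz.1
  refine ⟨deriv φ u, (norm_deriv_le_of_norm_le_on_ball hρ hφ hφ_norm).trans_eq
    (by field_simp; norm_num), ?_⟩
  have huR : R < u.re := h.lt_re_iterate hwR n
  refine deriv_eq_mul_deriv_of_semiconj_of_lift (differentiable_iterate_Pq ω (q * n) _)
    (h.differentiableAt_iterate hwR n) (h.differentiableAt_param hwR)
    (h.differentiableAt_param huR) (h.deriv_param_ne_zero huR) (hφ.differentiableAt hu_ball) hφ_u
    ?_ ?_
  · filter_upwards [(isOpen_lt continuous_const continuous_re).mem_nhds hwR] with z hz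
      using h_iterate hz
  · filter_upwards [hu_ball] with z hz using hφ_eq z hz

theorem exists_critical_point_mem_connectedComponentIn
    (h : IsAttractingPetal (Pq ω)^[q] τ F R) (hq : q ≠ 0) (hω : ‖ω‖ ≤ 1)
    (hw : R + 1 / 2 ≤ w.re) :
    ∃ k, -ω / 2 ∈ connectedComponentIn (basin ω) ((Pq ω)^[k] (τ w)) := by
  by_contra! h_crit
  have h_bound (n : ℕ) : ‖deriv τ w‖ ^ 2 * (n + 1) ≤ 64 := by
    obtain ⟨d, hd, h_eq⟩ := h.exists_deriv_param_eq_mul hq hω hw h_crit n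
    calc ‖deriv τ w‖ ^ 2 * (n + 1) = ‖d‖ ^ 2 * ‖deriv F^[n] w‖ ^ 2 * (n + 1) := by
          rw [h_eq, norm_mul, mul_pow]
      _ ≤ (8 / (n + 1 : ℝ)) ^ 2 * (n + 1) * (n + 1) := by
          gcongr
          exact h.norm_deriv_iterate_sq_le hw n
      _ = 64 := by field_simp; norm_num
  have h_pos : 0 < ‖deriv τ w‖ ^ 2 := by
    have := h.deriv_param_ne_zero (w := w) (by linarith)
    positivity
  obtain ⟨n, hn⟩ := exists_nat_gt (64 / ‖deriv τ w‖ ^ 2)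
  rw [div_lt_iff₀ h_pos] at hn
  linarith [h_bound n]

end IsAttractingPetal

theorem critical_point_in_immediate_basin_general {ω : ℂ} {q : ℕ} (hq : q ≠ 0)
    (hω : ω ^ q = 1) : (0 : ℂ) ∈ closure (connectedComponentIn (basin ω) (-ω / 2)) := by
  have hω_norm : ‖ω‖ = 1 := norm_eq_one_of_pow_eq_one hω hq
  have hω_ne : ω ≠ 0 := norm_ne_zero_iff.1 (by simp [hω_norm])
  obtain ⟨τ, F, R, hP⟩ := exists_isAttractingPetal
    ((differentiable_iterate_Pq ω q).analyticAt 0) (iterate_Pq_zero ω q)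
    (by rw [deriv_iterate_Pq_zero, hω]) (not_eventually_iterate_Pq_eq hω_ne hq)
  have hw : R + 1 / 2 ≤ ((R + 1 / 2 : ℝ) : ℂ).re := (ofReal_re _).ge
  obtain ⟨k, hk⟩ := hP.exists_critical_point_mem_connectedComponentIn hq hω_norm.le hw
  rw [← connectedComponentIn_eq hk]
  exact hP.zero_mem_closure_connectedComponentIn hq (by linarith) k

/-- The critical point `-ω/2` of `P_ω` lies in the immediate
parabolic basin: the connected component of `Λ_ω` containing `-ω/2` has the
parabolic fixed point `0` in its closure. -/
theorem critical_point_in_immediate_basin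
    (p q : ℕ) (hq : 2 ≤ q) (hp0 : 0 < p) (hpq : p < q) (hcop : Nat.Coprime p q)
    (ω : ℂ) (hω : ω = Complex.exp (2 * Real.pi * Complex.I * (p : ℂ) / (q : ℂ))) :
    (0 : ℂ) ∈ closure (connectedComponentIn (basin ω) (-ω / 2)) := by
  have hq0 : q ≠ 0 := by omega
  refine critical_point_in_immediate_basin_general hq0 ?_
  rw [hω, mul_div_assoc, (isPrimitiveRoot_exp_of_coprime p q hq0 hcop).pow_eq_one]
end

section
/- Petals absorb all orbits in the parabolic basin: let φ : Λ_ω → ℂ be an extended Fatou coordinate for P_ω (holomorphic, surjective, with φ(P_ω(z)) = 1/q + φ(z) and φ(−ω/2) = 0) and for δ ∈ ℝ let W_δ = φ^{−1}({x + iy : x > δ}). Then for every z ∈ Λ_ω and every δ ∈ ℝ there exists N ≥ 0 such that P_ω^n(z) ∈ W_δ for all n ≥ qN. -/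
open Complex Filter Topology Set

section Translation

variable {α : Type*} {f : α → α} {s : Set α} {z : α}

theorem apply_iterate_eq_nsmul_add {M : Type*} [AddMonoid M] {φ : α → M} {c : M}
    (hf : MapsTo f s s) (hφ : ∀ w ∈ s, φ (f w) = c + φ w) (hz : z ∈ s) (n : ℕ) :
    φ (f^[n] z) = n • c + φ z := by
  induction n with
  | zero => rw [Function.iterate_zero_apply, zero_nsmul, zero_add]
  | succ n ih =>
    rw [Function.iterate_succ_apply', hφ _ (hf.iterate n hz), ih, succ_nsmul', add_assoc]

theorem re_apply_iterate_eq_div_add {φ : α → ℂ} {q : ℕ} (hf : MapsTo f s s)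
    (hφ : ∀ w ∈ s, φ (f w) = 1 / (q : ℂ) + φ w) (hz : z ∈ s) (n : ℕ) :
    (φ (f^[n] z)).re = n / q + (φ z).re := by
  have translation_re : (n • (1 / (q : ℂ))).re = n / q := by
    rw [nsmul_eq_mul, mul_one_div, ← ofReal_natCast, ← ofReal_natCast, ← ofReal_div, ofReal_re]
  rw [apply_iterate_eq_nsmul_add hf hφ hz, add_re, translation_re]

theorem petals_absorb_orbits_general {φ : α → ℂ} {q : ℕ} (hf : MapsTo f s s) (hq : 0 < q)
    (hφ : ∀ w ∈ s, φ (f w) = 1 / (q : ℂ) + φ w) (hz : z ∈ s) (δ : ℝ) :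
    ∃ N : ℕ, ∀ n : ℕ, q * N ≤ n → f^[n] z ∈ {w ∈ s | δ < (φ w).re} := by
  obtain ⟨N, hN⟩ := exists_nat_gt (δ - (φ z).re)
  refine ⟨N, fun n hn => ⟨hf.iterate n hz, ?_⟩⟩
  have N_le_div : (N : ℝ) ≤ n / q := by
    rw [le_div_iff₀' (Nat.cast_pos.2 hq)]
    exact_mod_cast hn
  calc
    δ < N + (φ z).re := sub_lt_iff_lt_add.1 hN
    _ ≤ n / q + (φ z).re := by gcongr
    _ = (φ (f^[n] z)).re := (re_apply_iterate_eq_div_add hf hφ hz n).symm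

end Translation

theorem mapsTo_Pq_basinAug (ω : ℂ) : MapsTo (Pq ω) (basinAug ω) (basinAug ω) :=
  fun _ hz => (tendsto_add_atTop_iff_nat 1).2 hz

theorem mapsTo_Pq_compl_preFixed (ω : ℂ) : MapsTo (Pq ω) (preFixed ω)ᶜ (preFixed ω)ᶜ :=
  fun _ hz ⟨n, hn⟩ => hz ⟨n + 1, hn⟩

theorem mapsTo_Pq_basin (ω : ℂ) : MapsTo (Pq ω) (basin ω) (basin ω) :=
  (mapsTo_Pq_basinAug ω).inter_inter (mapsTo_Pq_compl_preFixed ω)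

/-- Petals absorb all orbits in the parabolic basin: given an
extended Fatou coordinate `φ` for `P_ω` and, for `δ ∈ ℝ`, the petal region
`W_δ = φ⁻¹({x + iy : x > δ})` (inside the basin), every orbit in `Λ_ω`
eventually enters `W_δ`: there is `N` with `P_ω^[n] z ∈ W_δ` for all `n ≥ qN`. -/
theorem petals_absorb_orbits
    (p q : ℕ) (hq : 2 ≤ q) (hp0 : 0 < p) (hpq : p < q) (hcop : Nat.Coprime p q)
    (ω : ℂ) (hω : ω = Complex.exp (2 * Real.pi * Complex.I * (p : ℂ) / (q : ℂ)))
    (φ : ℂ → ℂ)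
    (hφdiff : ∀ z ∈ basin ω, DifferentiableAt ℂ φ z)
    (hφsurj : ∀ w : ℂ, ∃ z ∈ basin ω, φ z = w)
    (hφeq : ∀ z ∈ basin ω, φ (Pq ω z) = 1 / (q : ℂ) + φ z)
    (hφnorm : φ (-ω / 2) = 0) :
    ∀ z ∈ basin ω, ∀ δ : ℝ, ∃ N : ℕ, ∀ n : ℕ, q * N ≤ n →
      (Pq ω)^[n] z ∈ {w ∈ basin ω | δ < (φ w).re} :=
  fun _ hz δ => petals_absorb_orbits_general (mapsTo_Pq_basin ω) (by lia) hφeq hz δ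
end
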